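/- Let ρ ∈ (0,∞) and let F : [−ρ,ρ] → ℝ. The following are equivalent: (1) for every positive semidefinite Hankel matrix of any finite size with entries in [−ρ,ρ], applying F entrywise yields a positive semidefinite matrix; (2) the same preservation holds for all positive semidefinite Hankel matrices with entries in [−ρ,ρ] that arise as truncated moment matrices of admissible measures; (3) F is real analytic on (−ρ,ρ), absolutely monotonic on (0,ρ) (all derivatives non-negative there), and F(ρ) ≥ lim_{x→ρ⁻} F(x) together with |F(−ρ)| ≤ F(ρ). -/

import Mathlib

open MeasureTheory Filter Set

/-- An admissible measure: a non-negative Borel measure on `ℝ` all of whose absolute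
moments are finite. -/
def IsAdmissible (μ : Measure ℝ) : Prop := ∀ k : ℕ, Integrable (fun x => x ^ k) μ

/-- The `k`-th power moment of a measure. -/
noncomputable def moment (μ : Measure ℝ) (k : ℕ) : ℝ := ∫ x, x ^ k ∂μ

/-- A Hankel matrix: the `(i,j)` entry depends only on `i + j`. -/
def IsHankelMat {n : ℕ} (A : Matrix (Fin n) (Fin n) ℝ) : Prop :=
  ∀ i j k l : Fin n, (i : ℕ) + (j : ℕ) = (k : ℕ) + (l : ℕ) → A i j = A k l

open scoped Topology ContDiff

lemma psd_iff_quad {n : ℕ} (A : Matrix (Fin n) (Fin n) ℝ) :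
    A.PosSemidef ↔ (∀ i j, A i j = A j i) ∧
      ∀ v : Fin n → ℝ, 0 ≤ ∑ i, ∑ j, v i * v j * A i j := by
  rw [Matrix.posSemidef_iff_dotProduct_mulVec]
  have h1 : A.IsHermitian ↔ ∀ i j, A i j = A j i := by
    rw [Matrix.IsHermitian.ext_iff]
    simp only [star_trivial]
    exact ⟨fun h i j => (h j i), fun h i j => (h j i)⟩
  rw [h1]
  refine and_congr Iff.rfl (forall_congr' fun v => ?_)
  have : star v ⬝ᵥ A.mulVec v = ∑ i, ∑ j, v i * v j * A i j := by
    simp only [dotProduct, Matrix.mulVec, star_trivial, Finset.mul_sum]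
    refine Finset.sum_congr rfl fun i _ => Finset.sum_congr rfl fun j _ => ?_
    ring
  rw [this]

lemma quad_pow {N : ℕ} (v : Fin N → ℝ) (z : ℝ) :
    ∑ i, ∑ j, v i * v j * z ^ ((i : ℕ) + (j : ℕ)) = (∑ i, v i * z ^ (i : ℕ)) ^ 2 := by
  rw [sq, Finset.sum_mul_sum]
  refine Finset.sum_congr rfl fun i _ => Finset.sum_congr rfl fun j _ => ?_
  rw [pow_add]; ring

lemma quad_sign {N : ℕ} (v : Fin N → ℝ) (h : ℝ → ℝ) (a z : ℝ) :
    ∑ i, ∑ j, v i * v j * (h (a * (-1) ^ ((i : ℕ) + (j : ℕ))) * z ^ ((i : ℕ) + (j : ℕ))) =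
      (h a + h (-a)) / 2 * (∑ i, v i * z ^ (i : ℕ)) ^ 2 +
      (h a - h (-a)) / 2 * (∑ i, v i * (-z) ^ (i : ℕ)) ^ 2 := by
  rw [← quad_pow, ← quad_pow, Finset.mul_sum, Finset.mul_sum, ← Finset.sum_add_distrib]
  refine Finset.sum_congr rfl fun i _ => ?_
  rw [Finset.mul_sum, Finset.mul_sum, ← Finset.sum_add_distrib]
  refine Finset.sum_congr rfl fun j _ => ?_
  rcases Nat.even_or_odd ((i : ℕ) + (j : ℕ)) with he | ho
  · rw [he.neg_one_pow, he.neg_pow]; ring_nf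
  · rw [ho.neg_one_pow, ho.neg_pow]; ring_nf

/-- the sequences of moments used -/
noncomputable def sq4 (g a b k : ℝ) (m : ℕ) : ℝ := g + a * (-1) ^ m + b * (1 / 2) ^ m + k * 0 ^ m

lemma exists_meas {g a b k : ℝ} (hg : 0 ≤ g) (ha : 0 ≤ a) (hb : 0 ≤ b) (hk : 0 ≤ k) :
    ∃ μ : Measure ℝ, IsAdmissible μ ∧ ∀ m, moment μ m = sq4 g a b k m := by
  have hi : ∀ (c t : ℝ) (m : ℕ), Integrable (fun x => x ^ m)
      (ENNReal.ofReal c • Measure.dirac t) := fun c t m =>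
    (integrable_dirac (by simp)).smul_measure ENNReal.ofReal_ne_top
  have h2 := fun m => (hi g 1 m).add_measure (hi a (-1) m)
  have h3 := fun m => (h2 m).add_measure (hi b (1/2) m)
  have h4 := fun m => (h3 m).add_measure (hi k 0 m)
  refine ⟨_, h4, fun m => ?_⟩
  unfold moment
  rw [integral_add_measure (h3 m) (hi k 0 m), integral_add_measure (h2 m) (hi b (1/2) m),
    integral_add_measure (hi g 1 m) (hi a (-1) m)]
  simp only [integral_smul_measure, integral_dirac, ENNReal.toReal_ofReal hg,
          ENNReal.toReal_ofReal ha, ENNReal.toReal_ofReal hb, ENNReal.toReal_ofReal hk, sq4,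
          smul_eq_mul, one_pow, mul_one]

lemma core2 {ρ : ℝ} {F : ℝ → ℝ}
    (H : ∀ (n : ℕ) (A : Matrix (Fin n) (Fin n) ℝ),
          (∃ μ : Measure ℝ, IsAdmissible μ ∧
            ∀ i j : Fin n, A i j = moment μ ((i : ℕ) + (j : ℕ))) →
          (∀ i j, A i j ∈ Set.Icc (-ρ) ρ) → A.PosSemidef → (A.map F).PosSemidef)
    {N : ℕ} (v : Fin N → ℝ) {g a b k : ℝ} (hg : 0 ≤ g) (ha : 0 ≤ a) (hb : 0 ≤ b) (hk : 0 ≤ k)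
    (hs : g + a + b + k ≤ ρ) :
    0 ≤ ∑ i, ∑ j, v i * v j * F (sq4 g a b k ((i : ℕ) + (j : ℕ))) := by
  have hr := H N (fun i j => sq4 g a b k ((i : ℕ) + (j : ℕ))) ?_ ?_ ?_
  · exact ((psd_iff_quad _).1 hr).2 v
  · obtain ⟨μ, h1, h2⟩ := exists_meas hg ha hb hk
    exact ⟨μ, h1, fun i j => (h2 _).symm⟩
  · intro i j
    refine abs_le.1 ?_
    refine le_trans ?_ hs
    unfold sq4
    have e : ∀ c t : ℝ, 0 ≤ c → |t| ≤ 1 → ∀ m : ℕ, |c * t ^ m| ≤ c := by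
      intro c t hc ht m
      rw [abs_mul, abs_of_nonneg hc, abs_pow]
      exact mul_le_of_le_one_right hc (pow_le_one₀ (abs_nonneg _) ht)
    have e1 := e a (-1) ha (by simp) ((i : ℕ) + j)
    have e2 := e b (1/2) hb (by rw [abs_of_pos] <;> norm_num) ((i : ℕ) + j)
    have e3 := e k 0 hk (by simp) ((i : ℕ) + j)
    rw [abs_le] at *
    constructor <;> linarith [e1.1, e1.2, e2.1, e2.2, e3.1, e3.2]
  · refine (psd_iff_quad _).2 ⟨fun i j => ?_, fun v => ?_⟩
    · rw [add_comm]
    have : ∑ i, ∑ j, v i * v j * sq4 g a b k ((i : ℕ) + (j : ℕ)) =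
      g * (∑ i, v i * 1 ^ (i : ℕ)) ^ 2 + a * (∑ i, v i * (-1) ^ (i : ℕ)) ^ 2 +
      b * (∑ i, v i * (1 / 2) ^ (i : ℕ)) ^ 2 + k * (∑ i, v i * 0 ^ (i : ℕ)) ^ 2 := by
      simp only [← quad_pow, Finset.mul_sum, ← Finset.sum_add_distrib]
      refine Finset.sum_congr rfl fun i _ => Finset.sum_congr rfl fun j _ => ?_
      simp only [sq4, one_pow]; ring
    rw [this]; positivity

/-- working hypothesis -/
def Pres (F : ℝ → ℝ) (R : ℝ) : Prop :=
  ∀ (N : ℕ) (v : Fin N → ℝ) (g a b k : ℝ), 0 ≤ g → 0 ≤ a → 0 ≤ b → 0 ≤ k → g + a + b + k ≤ R →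
    0 ≤ ∑ i, ∑ j, v i * v j * F (sq4 g a b k ((i : ℕ) + (j : ℕ)))

lemma Pres.mono {F : ℝ → ℝ} {R x y : ℝ} (H : Pres F R) (hx : 0 ≤ x) (hxy : x ≤ y) (hy : y ≤ R) :
    F x ≤ F y := by
  have := H 2 ![1, -1] x 0 0 (y - x) hx le_rfl le_rfl (by linarith) (by linarith)
  simp [Fin.sum_univ_succ, sq4] at this
  linarith

lemma Pres.est {F : ℝ → ℝ} {R m b x : ℝ} (H : Pres F R) (hb : 0 ≤ b) (h1 : |x| + b / 2 ≤ m)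
    (h2 : m + b ≤ R) :
    (F x - F (x - 3 * b / 8)) ^ 2 ≤
      F (m + b / 4) * (F (m + b) - 2 * F (m + b / 4) + F (m + b / 16)) := by
  have hx := abs_le.1 (show |x| ≤ m - b / 2 by linarith)
  have key : ∀ t : ℝ, 0 ≤ (F (m + b) - 2 * F (m + b / 4) + F (m + b / 16)) * (t * t) +
      (2 * (F x - F (x - 3 * b / 8))) * t + F (m + b / 4) := by
    intro t
    have := H 3 ![t, 1, -t] ((m + x - b / 2) / 2) ((m - x + b / 2) / 2) b 0 (by linarith)
      (by linarith) hb le_rfl (by linarith)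
    have s0 : sq4 ((m + x - b / 2) / 2) ((m - x + b / 2) / 2) b 0 0 = m + b := by
      simp [sq4]; ring
    have s1 : sq4 ((m + x - b / 2) / 2) ((m - x + b / 2) / 2) b 0 1 = x := by
      simp [sq4]; ring
    have s2 : sq4 ((m + x - b / 2) / 2) ((m - x + b / 2) / 2) b 0 2 = m + b / 4 := by
      simp [sq4]; ring
    have s3 : sq4 ((m + x - b / 2) / 2) ((m - x + b / 2) / 2) b 0 3 = x - 3 * b / 8 := by
      simp [sq4]; ring
    have s4 : sq4 ((m + x - b / 2) / 2) ((m - x + b / 2) / 2) b 0 4 = m + b / 16 := by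
      simp [sq4]; ring
    simp [Fin.sum_univ_succ, s0, s1, s2, s3, s4] at this
    linarith
  have := discrim_le_zero key
  unfold discrim at this
  nlinarith

lemma Pres.continuousAt {F : ℝ → ℝ} {R x : ℝ} (H : Pres F R) (hx : |x| < R) :
    ContinuousAt F x := by
  have hx0 := abs_nonneg x
  have hmono : MonotoneOn F (Icc 0 R) := fun y hy z hz hyz => H.mono hy.1 hyz hz.2
  obtain ⟨m, hm, hmc⟩ : ∃ m ∈ Ioo |x| R, ContinuousAt F m := by
    have hc := hmono.countable_not_continuousWithinAt
    by_contra! hcon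
    have hsub : Ioo |x| R ⊆ {y | y ∈ Icc 0 R ∧ ¬ ContinuousWithinAt F (Icc 0 R) y} := by
      intro y hy
      refine ⟨⟨hx0.trans hy.1.le, hy.2.le⟩, fun hcw => hcon y hy ?_⟩
      exact hcw.continuousAt (Icc_mem_nhds (hx0.trans_lt hy.1) hy.2)
    have := hc.mono hsub
    exact absurd this (Cardinal.Real.Ioo_countable_iff.not.2 (not_le.2 hx))
  set E : ℝ → ℝ := fun b =>
    F (m + b / 4) * (F (m + b) - 2 * F (m + b / 4) + F (m + b / 16)) with hE
  have hlim : Tendsto (fun y => E (8 * |x - y| / 3)) (𝓝 x) (𝓝 0) := by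
    have t1 : ∀ c : ℝ, Tendsto (fun y => F (m + 8 * |x - y| / 3 / c)) (𝓝 x) (𝓝 (F m)) := by
      intro c
      have : Tendsto (fun y => m + 8 * |x - y| / 3 / c) (𝓝 x) (𝓝 m) := by
        have hcont : Continuous (fun y => m + 8 * |x - y| / 3 / c) := by fun_prop
        simpa using hcont.tendsto x
      exact hmc.tendsto.comp this
    have := (t1 4).mul (((t1 1).sub ((t1 4).const_mul 2)).add (t1 16))
    simp only [div_one] at this
    convert this using 2
    ring
  have hsq : Tendsto (fun y => (F y - F x) ^ 2) (𝓝 x) (𝓝 0) := by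
    refine tendsto_of_tendsto_of_tendsto_of_le_of_le' tendsto_const_nhds hlim
      (Eventually.of_forall fun y => sq_nonneg _) ?_
    have c1 : ∀ᶠ y in 𝓝 x, |x| + 8 * |x - y| / 3 / 2 < m := by
      have hcont : Continuous (fun y => |x| + 8 * |x - y| / 3 / 2) := by fun_prop
      exact (hcont.tendsto x).eventually_lt_const (by simpa using hm.1)
    have c2 : ∀ᶠ y in 𝓝 x, |y| + 8 * |x - y| / 3 / 2 < m := by
      have hcont : Continuous (fun y => |y| + 8 * |x - y| / 3 / 2) := by fun_prop
      exact (hcont.tendsto x).eventually_lt_const (by simpa using hm.1)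
    have c3 : ∀ᶠ y in 𝓝 x, m + 8 * |x - y| / 3 < R := by
      have hcont : Continuous (fun y => m + 8 * |x - y| / 3) := by fun_prop
      exact (hcont.tendsto x).eventually_lt_const (by simpa using hm.2)
    filter_upwards [c1, c2, c3] with y h1 h2 h3
    rcases le_total y x with h | h
    · have := H.est (b := 8 * |x - y| / 3) (by positivity) h1.le h3.le
      have e : x - 3 * (8 * |x - y| / 3) / 8 = y := by
        rw [abs_of_nonneg (by linarith)]; ring
      rw [e] at this
      calc (F y - F x) ^ 2 = (F x - F y) ^ 2 := by ring
        _ ≤ _ := this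
    · have := H.est (b := 8 * |x - y| / 3) (by positivity) h2.le h3.le
      have e : y - 3 * (8 * |x - y| / 3) / 8 = x := by
        rw [abs_of_nonpos (by linarith)]; ring
      rw [e] at this
      exact this
  have habs : Tendsto (fun y => |F y - F x|) (𝓝 x) (𝓝 0) := by
    have := hsq.sqrt
    simpa [Real.sqrt_sq_eq_abs] using this
  exact tendsto_iff_dist_tendsto_zero.2 (by simpa [Real.dist_eq] using habs)

/-- two-atom version -/
def PresQ (f : ℝ → ℝ) (R : ℝ) : Prop :=
  ∀ (N : ℕ) (v : Fin N → ℝ) (a b : ℝ), 0 ≤ a → 0 ≤ b → a + b ≤ R →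
    0 ≤ ∑ i, ∑ j, v i * v j *
      f (a * (-1) ^ ((i : ℕ) + (j : ℕ)) + b * (1 / 2) ^ ((i : ℕ) + (j : ℕ)))

lemma Pres.presQ {F : ℝ → ℝ} {R : ℝ} (H : Pres F R) : PresQ F R := by
  intro N v a b ha hb hab
  have := H N v 0 a b 0 le_rfl ha hb le_rfl (by linarith)
  simpa [sq4] using this

lemma peano {f : ℝ → ℝ} {R x : ℝ} (hf : ∀ t ∈ Ioo (-R) R, ContDiffAt ℝ ∞ f t)
    (hx : x ∈ Ioo (-R) R) (n : ℕ) {w : ℝ} (hw : 0 < w) :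
    Tendsto (fun b : ℝ => (f (x + b * w) -
      ∑ l ∈ Finset.range (n + 1), iteratedDeriv l f x / l.factorial * (b * w) ^ l) / b ^ n)
      (𝓝[>] 0) (𝓝 0) := by
  have hcd : ContDiffOn ℝ n f (Ioo (-R) R) := fun t ht =>
    ((hf t ht).of_le (by exact_mod_cast le_top)).contDiffWithinAt
  have h1 := Real.taylor_tendsto (convex_Ioo (-R) R) hx hcd
  rw [isOpen_Ioo.nhdsWithin_eq hx] at h1
  have h2 : Tendsto (fun b : ℝ => x + b * w) (𝓝[>] 0) (𝓝 x) := by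
    have hc : Continuous (fun b : ℝ => x + b * w) := by fun_prop
    have := hc.tendsto 0
    simp only [zero_mul, add_zero] at this
    exact this.mono_left nhdsWithin_le_nhds
  have h3 := (h1.comp h2).mul_const (w ^ n)
  rw [zero_mul] at h3
  refine h3.congr' ?_
  filter_upwards [self_mem_nhdsWithin] with b hb
  have hb : (0 : ℝ) < b := hb
  simp only [Function.comp, taylor_within_apply, add_sub_cancel_left, smul_eq_mul]
  rw [mul_pow b w n, div_mul_eq_mul_div, mul_div_mul_right _ _ (by positivity)]
  congr 2
  refine Finset.sum_congr rfl fun l _ => ?_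
  rw [iteratedDerivWithin_of_isOpen isOpen_Ioo hx]
  field_simp

lemma loewner_aux {f : ℝ → ℝ} {R a : ℝ} (hf : ∀ t ∈ Ioo (-R) R, ContDiffAt ℝ ∞ f t)
    (H : PresQ f R) (ha : 0 ≤ a) (haR : a < R) (n : ℕ) (σ : ℝ) :
    0 ≤ (iteratedDeriv n f a + iteratedDeriv n f (-a)) * (1 - σ) ^ 2 +
      (iteratedDeriv n f a - iteratedDeriv n f (-a)) * (1 + σ) ^ 2 := by
  classical
  set u : ℝ := 1 / 2 with hu
  set D : ℕ → ℝ → ℝ := fun l x => iteratedDeriv l f x / l.factorial with hD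
  set P : Polynomial ℝ := (∏ i ∈ Finset.range n, (Polynomial.X ^ 2 - Polynomial.C (u ^ (2 * i)))) *
    (Polynomial.X - Polynomial.C (σ * u ^ n)) with hP
  have hPev : ∀ z : ℝ, P.eval z = (∏ i ∈ Finset.range n, (z ^ 2 - u ^ (2 * i))) *
      (z - σ * u ^ n) := by
    intro z; simp [hP, Polynomial.eval_prod]
  set N := P.natDegree + 1
  set v : Fin N → ℝ := fun i => P.coeff i with hv
  have hev : ∀ z : ℝ, ∑ i, v i * z ^ (i : ℕ) = P.eval z := by
    intro z
    rw [Polynomial.eval_eq_sum_range]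
    exact Fin.sum_univ_eq_sum_range (fun i => P.coeff i * z ^ i) N
  -- main quantity
  set K : ℕ → ℝ := fun l => (D l a + D l (-a)) / 2 * (P.eval (u ^ l)) ^ 2 +
    (D l a - D l (-a)) / 2 * (P.eval (-(u ^ l))) ^ 2 with hK
  have hKs : ∀ l, ∑ i : Fin N, ∑ j : Fin N, v i * v j * (D l (a * (-1) ^ ((i : ℕ) + (j : ℕ))) *
      (u ^ l) ^ ((i : ℕ) + (j : ℕ))) = K l := by
    intro l
    rw [quad_sign, hev, hev]
  have hK0 : ∀ l < n, K l = 0 := by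
    intro l hl
    have : (∏ i ∈ Finset.range n, ((u ^ l) ^ 2 - u ^ (2 * i))) = 0 :=
      Finset.prod_eq_zero (Finset.mem_range.2 hl) (by ring)
    simp only [hK, hPev, neg_sq, this]
    ring
  have hlim : Tendsto (fun b : ℝ => ∑ i : Fin N, ∑ j : Fin N, v i * v j *
      ((f (a * (-1) ^ ((i : ℕ) + (j : ℕ)) + b * u ^ ((i : ℕ) + (j : ℕ))) -
      ∑ l ∈ Finset.range (n + 1), D l (a * (-1) ^ ((i : ℕ) + (j : ℕ))) *
        (b * u ^ ((i : ℕ) + (j : ℕ))) ^ l) / b ^ n)) (𝓝[>] 0) (𝓝 0) := by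
    have : Tendsto (fun b : ℝ => ∑ i : Fin N, ∑ j : Fin N, v i * v j *
      ((f (a * (-1) ^ ((i : ℕ) + (j : ℕ)) + b * u ^ ((i : ℕ) + (j : ℕ))) -
      ∑ l ∈ Finset.range (n + 1), D l (a * (-1) ^ ((i : ℕ) + (j : ℕ))) *
        (b * u ^ ((i : ℕ) + (j : ℕ))) ^ l) / b ^ n)) (𝓝[>] 0)
        (𝓝 (∑ i : Fin N, ∑ j : Fin N, v i * v j * 0)) := by
      refine tendsto_finsetSum _ fun i _ => tendsto_finsetSum _ fun j _ => ?_
      refine Tendsto.const_mul _ (peano hf ?_ n (by positivity))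
      rcases neg_one_pow_eq_or ℝ ((i : ℕ) + (j : ℕ)) with h | h <;> rw [h] <;>
        constructor <;> linarith
    simpa using this
  have hge : ∀ᶠ b : ℝ in 𝓝[>] 0, -K n ≤ ∑ i : Fin N, ∑ j : Fin N, v i * v j *
      ((f (a * (-1) ^ ((i : ℕ) + (j : ℕ)) + b * u ^ ((i : ℕ) + (j : ℕ))) -
      ∑ l ∈ Finset.range (n + 1), D l (a * (-1) ^ ((i : ℕ) + (j : ℕ))) *
        (b * u ^ ((i : ℕ) + (j : ℕ))) ^ l) / b ^ n) := by
    filter_upwards [Ioo_mem_nhdsGT (show (0 : ℝ) < R - a by linarith)] with b hb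
    have h0 := H N v a b ha hb.1.le (by linarith [hb.2])
    have hbn : 0 < b ^ n := pow_pos hb.1 n
    have e1 : ∑ i : Fin N, ∑ j : Fin N, v i * v j *
        (∑ l ∈ Finset.range (n + 1), D l (a * (-1) ^ ((i : ℕ) + (j : ℕ))) *
        (b * u ^ ((i : ℕ) + (j : ℕ))) ^ l) = b ^ n * K n := by
      calc _ = ∑ l ∈ Finset.range (n + 1), b ^ l * (∑ i : Fin N, ∑ j : Fin N, v i * v j *
              (D l (a * (-1) ^ ((i : ℕ) + (j : ℕ))) * (u ^ l) ^ ((i : ℕ) + (j : ℕ)))) := by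
            simp only [Finset.mul_sum]
            symm
            rw [Finset.sum_comm]
            refine Finset.sum_congr rfl fun i _ => ?_
            rw [Finset.sum_comm]
            refine Finset.sum_congr rfl fun j _ => Finset.sum_congr rfl fun l _ => ?_
            rw [mul_pow, ← pow_mul, ← pow_mul, mul_comm l]; ring
        _ = ∑ l ∈ Finset.range (n + 1), b ^ l * K l := by simp only [hKs]
        _ = b ^ n * K n := by
            rw [Finset.sum_range_succ, Finset.sum_eq_zero, zero_add]
            intro l hl
            rw [hK0 l (Finset.mem_range.1 hl), mul_zero]
    have e2 : ∑ i : Fin N, ∑ j : Fin N, v i * v j *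
      ((f (a * (-1) ^ ((i : ℕ) + (j : ℕ)) + b * u ^ ((i : ℕ) + (j : ℕ))) -
      ∑ l ∈ Finset.range (n + 1), D l (a * (-1) ^ ((i : ℕ) + (j : ℕ))) *
        (b * u ^ ((i : ℕ) + (j : ℕ))) ^ l) / b ^ n) =
      (∑ i : Fin N, ∑ j : Fin N, v i * v j *
        f (a * (-1) ^ ((i : ℕ) + (j : ℕ)) + b * u ^ ((i : ℕ) + (j : ℕ))) - b ^ n * K n) / b ^ n := by
      rw [← e1, ← Finset.sum_sub_distrib, Finset.sum_div]
      refine Finset.sum_congr rfl fun i _ => ?_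
      rw [← Finset.sum_sub_distrib, Finset.sum_div]
      refine Finset.sum_congr rfl fun j _ => ?_
      ring
    rw [e2, le_div_iff₀ hbn]
    linarith
  have hKn : 0 ≤ K n := by
    have := ge_of_tendsto hlim hge
    linarith
  have hne : (∏ i ∈ Finset.range n, ((u ^ n) ^ 2 - u ^ (2 * i))) ≠ 0 := by
    refine Finset.prod_ne_zero_iff.2 fun i hi => ?_
    have hi := Finset.mem_range.1 hi
    have : u ^ (2 * n) < u ^ (2 * i) := pow_lt_pow_right_of_lt_one₀ (by positivity)
      (by rw [hu]; norm_num) (by omega)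
    rw [← pow_mul, mul_comm n]
    linarith
  simp only [hK, hPev, neg_sq, hD] at hKn
  set p := (∏ i ∈ Finset.range n, ((u ^ n) ^ 2 - u ^ (2 * i)))
  have hpos : 0 < p ^ 2 * (u ^ n) ^ 2 / (2 * n.factorial) := by positivity
  refine nonneg_of_mul_nonneg_right (a := p ^ 2 * (u ^ n) ^ 2 / (2 * n.factorial)) ?_ hpos
  refine hKn.trans_eq ?_
  field_simp
  ring

lemma loewner {f : ℝ → ℝ} {R a : ℝ} (hf : ∀ t ∈ Ioo (-R) R, ContDiffAt ℝ ∞ f t)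
    (H : PresQ f R) (ha : 0 ≤ a) (haR : a < R) (n : ℕ) :
    |iteratedDeriv n f (-a)| ≤ iteratedDeriv n f a := by
  have h1 := loewner_aux hf H ha haR n 1
  have h2 := loewner_aux hf H ha haR n (-1)
  rw [abs_le]; constructor <;> linarith

lemma taylor_int {f : ℝ → ℝ} {R x : ℝ} (hf : ∀ t ∈ Ioo (-R) R, ContDiffAt ℝ ∞ f t)
    (hx : |x| < R) (n : ℕ) :
    f x - ∑ l ∈ Finset.range (n + 1), iteratedDeriv l f 0 / l.factorial * x ^ l =
      x ^ (n + 1) * ∫ s in (0 : ℝ)..1, ((1 - s) ^ n / n.factorial) *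
        iteratedDeriv (n + 1) f (s * x) := by
  rcases eq_or_ne x 0 with rfl | hx0
  · rw [Finset.sum_range_succ']
    simp
  have hxx := abs_lt.1 hx
  have hsub : uIcc 0 x ⊆ Ioo (-R) R := by
    intro t ht
    rcases le_total 0 x with h | h
    · rw [uIcc_of_le h] at ht
      exact ⟨by linarith [ht.1], by linarith [ht.2]⟩
    · rw [uIcc_of_ge h] at ht
      exact ⟨by linarith [ht.1], by linarith [ht.2]⟩
  have hun : UniqueDiffOn ℝ (uIcc 0 x) := uniqueDiffOn_uIcc (Ne.symm hx0)
  have hid : ∀ (k : ℕ), ∀ t ∈ uIcc 0 x,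
      iteratedDerivWithin k f (uIcc 0 x) t = iteratedDeriv k f t := fun k t ht =>
    iteratedDerivWithin_eq_iteratedDeriv hun ((hf t (hsub ht)).of_le (by exact_mod_cast le_top)) ht
  have h := taylor_integral_remainder (f := f) (x := x) (x₀ := 0) (n := n)
    (fun t ht => ((hf t (hsub ht)).of_le (by exact_mod_cast le_top)).contDiffWithinAt)
  rw [taylor_within_apply] at h
  have e1 : ∑ k ∈ Finset.range (n + 1), ((k.factorial : ℝ)⁻¹ * (x - 0) ^ k) •
      iteratedDerivWithin k f (uIcc 0 x) 0 =
      ∑ l ∈ Finset.range (n + 1), iteratedDeriv l f 0 / l.factorial * x ^ l := by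
    refine Finset.sum_congr rfl fun l _ => ?_
    rw [hid l 0 left_mem_uIcc, sub_zero, smul_eq_mul]
    field_simp
  rw [e1] at h
  rw [h]
  have e2 : ∫ t in (0 : ℝ)..x, ((x - t) ^ n / (n.factorial : ℝ)) •
      iteratedDerivWithin (n + 1) f (uIcc 0 x) t =
      ∫ t in (0 : ℝ)..x, ((x - t) ^ n / (n.factorial : ℝ)) * iteratedDeriv (n + 1) f t := by
    refine intervalIntegral.integral_congr fun t ht => ?_
    simp only [smul_eq_mul]
    rw [hid _ t ht]
  rw [e2]
  have e3 := intervalIntegral.mul_integral_comp_mul_right (a := 0) (b := 1)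
    (f := fun t => ((x - t) ^ n / (n.factorial : ℝ)) * iteratedDeriv (n + 1) f t) x
  rw [zero_mul, one_mul] at e3
  rw [← e3, pow_succ', mul_assoc, ← intervalIntegral.integral_const_mul (x ^ n)]
  congr 1
  refine intervalIntegral.integral_congr fun t _ => ?_
  rw [show x - t * x = x * (1 - t) by ring, mul_pow]
  ring

lemma idiff {f : ℝ → ℝ} {R : ℝ} (hf : ∀ t ∈ Ioo (-R) R, ContDiffAt ℝ ∞ f t) (n : ℕ) {t : ℝ}
    (ht : t ∈ Ioo (-R) R) : DifferentiableAt ℝ (iteratedDeriv n f) t := by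
  have hcd : ContDiffOn ℝ ∞ f (Ioo (-R) R) := fun t ht => (hf t ht).contDiffWithinAt
  have := hcd.differentiableOn_iteratedDerivWithin (m := n)
    (by exact_mod_cast ENat.natCast_lt_top n) isOpen_Ioo.uniqueDiffOn
  have h2 := (this t ht).differentiableAt (isOpen_Ioo.mem_nhds ht)
  refine h2.congr_of_eventuallyEq ?_
  filter_upwards [isOpen_Ioo.mem_nhds ht] with y hy
  exact (iteratedDerivWithin_of_isOpen isOpen_Ioo hy).symm

lemma bern {f : ℝ → ℝ} {R x : ℝ} (hf : ∀ t ∈ Ioo (-R) R, ContDiffAt ℝ ∞ f t)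
    (hpos : ∀ n : ℕ, ∀ t ∈ Ico 0 R, 0 ≤ iteratedDeriv n f t)
    (hx : |x| < R)
    (hdom : ∀ n : ℕ, ∀ s ∈ Icc (0 : ℝ) 1, |iteratedDeriv n f (s * x)| ≤ iteratedDeriv n f (s * |x|)) :
    HasSum (fun k : ℕ => iteratedDeriv k f 0 / k.factorial * x ^ k) (f x) := by
  obtain ⟨y, hxy, hyR⟩ := exists_between hx
  have hy0 : 0 < y := (abs_nonneg x).trans_lt hxy
  have hyabs : |y| < R := by rwa [abs_of_pos hy0]
  have hcont : ∀ n : ℕ, ContinuousOn (iteratedDeriv n f) (Ioo (-R) R) := by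
    intro n t ht
    exact (idiff hf n ht).continuousAt.continuousWithinAt
  have hmono : ∀ n : ℕ, MonotoneOn (iteratedDeriv n f) (Ico 0 R) := by
    intro n
    have hs : Ico 0 R ⊆ Ioo (-R) R := fun t ht => ⟨by linarith [ht.1, ht.2], ht.2⟩
    refine monotoneOn_of_deriv_nonneg (convex_Ico 0 R) ((hcont n).mono hs) ?_ ?_
    · rw [interior_Ico]
      intro t ht
      exact (idiff hf n (hs ⟨ht.1.le, ht.2⟩)).differentiableWithinAt
    · rw [interior_Ico]
      intro t ht
      rw [← iteratedDeriv_succ]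
      exact hpos (n + 1) t ⟨ht.1.le, ht.2⟩
  set I : ℝ → ℕ → ℝ := fun z n => ∫ s in (0 : ℝ)..1, ((1 - s) ^ n / n.factorial) *
        iteratedDeriv (n + 1) f (s * z) with hI
  have hmem : ∀ z : ℝ, |z| < R → ∀ s ∈ Icc (0 : ℝ) 1, s * z ∈ Ioo (-R) R := by
    intro z hz s hs
    rw [mem_Ioo, ← abs_lt, abs_mul, abs_of_nonneg hs.1]
    exact (mul_le_of_le_one_left (abs_nonneg z) hs.2).trans_lt hz
  have hint : ∀ z : ℝ, |z| < R → ∀ n : ℕ, IntervalIntegrable (fun s => ((1 - s) ^ n / n.factorial) *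
        iteratedDeriv (n + 1) f (s * z)) volume 0 1 := by
    intro z hz n
    apply ContinuousOn.intervalIntegrable
    rw [uIcc_of_le zero_le_one]
    refine ContinuousOn.mul (by fun_prop) ?_
    exact (hcont (n + 1)).comp (by fun_prop) (fun s hs => hmem z hz s hs)
  have hIle : ∀ n, |I x n| ≤ I y n := by
    intro n
    have := intervalIntegral.norm_integral_le_of_norm_le (μ := volume) zero_le_one
      (f := fun s => ((1 - s) ^ n / n.factorial) * iteratedDeriv (n + 1) f (s * x))
      (Eventually.of_forall fun s hs => ?_) (hint y hyabs n)
    · simpa [Real.norm_eq_abs, hI] using this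
    · have hs' : s ∈ Icc (0 : ℝ) 1 := ⟨hs.1.le, hs.2⟩
      have h1 : 0 ≤ (1 - s) ^ n / (n.factorial : ℝ) := by
        have : 0 ≤ 1 - s := by linarith [hs.2]
        positivity
      rw [Real.norm_eq_abs, abs_mul, abs_of_nonneg h1]
      refine mul_le_mul_of_nonneg_left ((hdom (n + 1) s hs').trans ?_) h1
      have := hmem y hyabs s hs'
      refine hmono (n + 1) ⟨by have := hs'.1; positivity, ?_⟩ ⟨by have := hs'.1; positivity, this.2⟩ ?_
      · exact lt_of_le_of_lt (mul_le_mul_of_nonneg_left hxy.le hs'.1) this.2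
      · exact mul_le_mul_of_nonneg_left hxy.le hs'.1
  have hIy : ∀ n, 0 ≤ I y n := fun n => (abs_nonneg _).trans (hIle n)
  have hc0 : ∀ k, 0 ≤ iteratedDeriv k f 0 / k.factorial := fun k =>
    div_nonneg (hpos k 0 ⟨le_rfl, hy0.trans hyR⟩) (by positivity)
  have hTy : ∀ n, y ^ (n + 1) * I y n ≤ f y := by
    intro n
    have := taylor_int hf hyabs n
    have h2 : 0 ≤ ∑ l ∈ Finset.range (n + 1), iteratedDeriv l f 0 / l.factorial * y ^ l :=
      Finset.sum_nonneg fun l _ => mul_nonneg (hc0 l) (by positivity)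
    linarith
  have hSy : ∀ n, ∑ l ∈ Finset.range n, iteratedDeriv l f 0 / l.factorial * y ^ l ≤ f y := by
    intro n
    have := taylor_int hf hyabs n
    rw [Finset.sum_range_succ] at this
    have h1 : 0 ≤ iteratedDeriv n f 0 / n.factorial * y ^ n := mul_nonneg (hc0 n) (by positivity)
    have h2 : 0 ≤ y ^ (n + 1) * I y n := mul_nonneg (by positivity) (hIy n)
    linarith
  have hsumy : Summable (fun l : ℕ => iteratedDeriv l f 0 / l.factorial * y ^ l) :=
    summable_of_sum_range_le (fun l => mul_nonneg (hc0 l) (by positivity)) hSy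
  have hsumx : Summable (fun l : ℕ => iteratedDeriv l f 0 / l.factorial * x ^ l) := by
    refine Summable.of_norm_bounded hsumy fun l => ?_
    rw [Real.norm_eq_abs, abs_mul, abs_of_nonneg (hc0 l), abs_pow]
    exact mul_le_mul_of_nonneg_left (pow_le_pow_left₀ (abs_nonneg x) hxy.le l) (hc0 l)
  refine (hsumx.hasSum_iff_tendsto_nat).2 ?_
  rw [← tendsto_add_atTop_iff_nat 1]
  have hrem : Tendsto (fun n => x ^ (n + 1) * I x n) atTop (𝓝 0) := by
    have hq : Tendsto (fun n : ℕ => (|x| / y) ^ (n + 1) * f y) atTop (𝓝 0) := by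
      have := (tendsto_pow_atTop_nhds_zero_of_lt_one (r := |x| / y) (by positivity)
        ((div_lt_one hy0).2 hxy))
      simpa using ((tendsto_add_atTop_iff_nat 1).2 this).mul_const (f y)
    refine squeeze_zero_norm (fun n => ?_) hq
    rw [Real.norm_eq_abs, abs_mul, abs_pow]
    calc |x| ^ (n + 1) * |I x n| ≤ |x| ^ (n + 1) * I y n :=
          mul_le_mul_of_nonneg_left (hIle n) (by positivity)
      _ = (|x| / y) ^ (n + 1) * (y ^ (n + 1) * I y n) := by
          rw [div_pow]; field_simp
      _ ≤ _ := mul_le_mul_of_nonneg_left (hTy n) (by positivity)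
  have : Tendsto (fun n => f x - x ^ (n + 1) * I x n) atTop (𝓝 (f x - 0)) :=
    tendsto_const_nhds.sub hrem
  rw [sub_zero] at this
  refine this.congr fun n => ?_
  have := taylor_int hf hx n
  linarith

lemma smooth_series {f : ℝ → ℝ} {R : ℝ} (hf : ∀ t ∈ Ioo (-R) R, ContDiffAt ℝ ∞ f t)
    (H : PresQ f R) (hR : 0 < R) :
    (∀ k : ℕ, 0 ≤ iteratedDeriv k f 0 / k.factorial) ∧
    ∀ x, |x| < R → HasSum (fun k : ℕ => iteratedDeriv k f 0 / k.factorial * x ^ k) (f x) := by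
  have hpos : ∀ n : ℕ, ∀ t ∈ Ico 0 R, 0 ≤ iteratedDeriv n f t := fun n t ht =>
    (abs_nonneg _).trans (loewner hf H ht.1 ht.2 n)
  refine ⟨fun k => div_nonneg (hpos k 0 ⟨le_rfl, hR⟩) (by positivity), fun x hx => ?_⟩
  refine bern hf hpos hx fun n s hs => ?_
  have hlt : s * |x| < R := (mul_le_of_le_one_left (abs_nonneg x) hs.2).trans_lt hx
  have h0 : 0 ≤ s * |x| := mul_nonneg hs.1 (abs_nonneg x)
  rcases abs_choice x with h | h
  · rw [h] at hlt h0 ⊢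
    exact le_of_eq (abs_of_nonneg (hpos n _ ⟨h0, hlt⟩))
  · have := loewner hf H h0 hlt n
    rw [h] at this ⊢
    simpa using this

lemma compact_series {F : ℝ → ℝ} {r : ℝ} (hr : 0 < r) (f : ℕ → ℝ → ℝ) (c : ℕ → ℕ → ℝ)
    (hc : ∀ m k, 0 ≤ c m k)
    (hs : ∀ m x, |x| ≤ r → HasSum (fun k => c m k * x ^ k) (f m x))
    (hlim : ∀ x, |x| ≤ r → Tendsto (fun m => f m x) atTop (𝓝 (F x))) :
    ∃ d : ℕ → ℝ, ∀ x, |x| < r → HasSum (fun k => d k * x ^ k) (F x) := by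
  have hrr : |r| ≤ r := by rw [abs_of_pos hr]
  obtain ⟨M, hM⟩ := (hlim r hrr).bddAbove_range
  have hM' : ∀ m, f m r ≤ M := fun m => hM ⟨m, rfl⟩
  have hcM : ∀ m k, c m k ≤ M / r ^ k := by
    intro m k
    rw [le_div_iff₀ (by positivity)]
    exact (le_hasSum (hs m r hrr) k fun j _ => mul_nonneg (hc m j) (by positivity)).trans (hM' m)
  have hcomp : IsCompact (Set.univ.pi fun k : ℕ => Icc (0 : ℝ) (M / r ^ k)) :=
    isCompact_univ_pi fun k => isCompact_Icc
  obtain ⟨d, hd, ψ, hψ, hψlim⟩ := hcomp.tendsto_subseq (x := c)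
    (fun m => fun k _ => ⟨hc m k, hcM m k⟩)
  have hd' : ∀ k, d k ∈ Icc (0 : ℝ) (M / r ^ k) := fun k => hd k (mem_univ k)
  have hM0 : 0 ≤ M := by
    have := (hd' 0).1.trans (hd' 0).2
    simpa using this
  refine ⟨d, fun x hx => ?_⟩
  have hgeo : Summable (fun k : ℕ => M * (|x| / r) ^ k) :=
    (summable_geometric_of_lt_one (by positivity) ((div_lt_one hr).2 hx)).mul_left M
  have hbd : ∀ e : ℝ, ∀ k : ℕ, e ∈ Icc (0 : ℝ) (M / r ^ k) → ‖e * x ^ k‖ ≤ M * (|x| / r) ^ k := by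
    intro e k he
    rw [Real.norm_eq_abs, abs_mul, abs_of_nonneg he.1, abs_pow]
    calc e * |x| ^ k ≤ M / r ^ k * |x| ^ k := mul_le_mul_of_nonneg_right he.2 (by positivity)
      _ = _ := by rw [div_pow]; ring
  have hsumd : Summable (fun k => d k * x ^ k) :=
    Summable.of_norm_bounded hgeo fun k => hbd _ k (hd' k)
  have ht := tendsto_tsum_of_dominated_convergence (𝓕 := atTop)
    (f := fun (m : ℕ) (k : ℕ) => c (ψ m) k * x ^ k) (g := fun k => d k * x ^ k) hgeo
    (fun k => (((continuous_apply k).tendsto d).comp hψlim).mul_const _)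
    (Eventually.of_forall fun m k => hbd _ k ⟨hc _ k, hcM _ k⟩)
  have he : (fun m => ∑' k, c (ψ m) k * x ^ k) = fun m => f (ψ m) x := by
    funext m; exact (hs (ψ m) x hx.le).tsum_eq
  rw [he] at ht
  have := tendsto_nhds_unique ht ((hlim x hx.le).comp hψ.tendsto_atTop)
  rw [← this]
  exact hsumd.hasSum

open scoped Convolution in
lemma Pres.series {F : ℝ → ℝ} {ρ r : ℝ} (H : Pres F ρ) (hr : 0 < r) (hrρ : r < ρ) :
    ∃ d : ℕ → ℝ, ∀ x, |x| < r → HasSum (fun k => d k * x ^ k) (F x) := by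
  obtain ⟨δ, hδ, hδ'⟩ : ∃ δ, 0 < δ ∧ r + 4 * δ = ρ := ⟨(ρ - r) / 4, by linarith, by ring⟩
  set w := r + 3 * δ with hw
  have hw0 : 0 < w := by positivity
  set F1 : ℝ → ℝ := fun x => F (max (-w) (min w x)) with hF1
  have hF1c : Continuous F1 := by
    rw [continuous_iff_continuousAt]
    intro x
    have hc : Continuous (fun x : ℝ => max (-w) (min w x)) := by fun_prop
    refine ContinuousAt.comp (f := fun x : ℝ => max (-w) (min w x)) (g := F)
      (H.continuousAt ?_) hc.continuousAt
    have : |max (-w) (min w x)| ≤ w := by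
      rw [abs_le]
      exact ⟨le_max_left _ _, max_le (by linarith) (min_le_left _ _)⟩
    linarith
  have hF1e : ∀ x, |x| ≤ w → F1 x = F x := by
    intro x hx
    rw [abs_le] at hx
    simp only [hF1, min_eq_right hx.2, max_eq_right hx.1]
  set ε : ℕ → ℝ := fun m => δ / (m + 1) with hε
  have hε0 : ∀ m, 0 < ε m := fun m => by simp only [hε]; positivity
  have hεδ : ∀ m, ε m ≤ δ := fun m => div_le_self hδ.le (by simp)
  have hεlim : Tendsto ε atTop (𝓝 0) := by
    have := (tendsto_one_div_add_atTop_nhds_zero_nat (𝕜 := ℝ)).const_mul δ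
    simpa [hε, div_eq_mul_inv] using this
  let φ : ℕ → ContDiffBump (0 : ℝ) := fun m =>
    ⟨ε m / 2, ε m, by linarith [hε0 m], by linarith [hε0 m]⟩
  set cv : ℕ → ℝ → ℝ := fun m => (φ m).normed volume ⋆[ContinuousLinearMap.lsmul ℝ ℝ, volume] F1
    with hcv
  have hcvd : ∀ m, ContDiff ℝ ∞ (cv m) := fun m =>
    (φ m).hasCompactSupport_normed.contDiff_convolution_left _ (φ m).contDiff_normed
      hF1c.locallyIntegrable
  set f : ℕ → ℝ → ℝ := fun m x => cv m (x + ε m) with hf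
  have hfd : ∀ m, ContDiff ℝ ∞ (f m) := fun m => (hcvd m).comp (by fun_prop)
  have hfv : ∀ m x, f m x = ∫ t, (φ m).normed volume t * F1 (x + ε m - t) := by
    intro m x
    simp only [hf, hcv, convolution_lsmul, smul_eq_mul]
  have hfi : ∀ m x, Integrable (fun t => (φ m).normed volume t * F1 (x + ε m - t)) := by
    intro m x
    refine Continuous.integrable_of_hasCompactSupport ?_ ?_
    · exact (φ m).continuous_normed.mul (hF1c.comp (by fun_prop))
    · exact (φ m).hasCompactSupport_normed.mul_right
  have hflim : ∀ x, |x| ≤ r → Tendsto (fun m => f m x) atTop (𝓝 (F x)) := by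
    intro x hx
    rw [← hF1e x (by linarith)]
    refine ContDiffBump.convolution_tendsto_right (φ := φ) (g := fun _ => F1)
      (k := fun m => x + ε m) hεlim
      (Eventually.of_forall fun _ => hF1c.aestronglyMeasurable)
      ((hF1c.tendsto x).comp tendsto_snd) ?_
    simpa using tendsto_const_nhds.add hεlim
  have hQ : ∀ m, PresQ (f m) (r + δ) := by
    intro m N v a b ha hb hab
    have e : ∑ i : Fin N, ∑ j : Fin N, v i * v j *
        f m (a * (-1) ^ ((i : ℕ) + (j : ℕ)) + b * (1 / 2) ^ ((i : ℕ) + (j : ℕ))) =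
        ∫ t, ∑ i : Fin N, ∑ j : Fin N, v i * v j * ((φ m).normed volume t *
          F1 (a * (-1) ^ ((i : ℕ) + (j : ℕ)) + b * (1 / 2) ^ ((i : ℕ) + (j : ℕ)) + ε m - t)) := by
      rw [integral_finsetSum _ fun i _ => integrable_finsetSum _ fun j _ => (hfi m _).const_mul _]
      refine Finset.sum_congr rfl fun i _ => ?_
      rw [integral_finsetSum _ fun j _ => (hfi m _).const_mul _]
      refine Finset.sum_congr rfl fun j _ => ?_
      rw [hfv, integral_const_mul]
    rw [e]
    refine integral_nonneg fun t => ?_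
    simp only [Pi.zero_apply]
    by_cases ht : t ∈ Metric.ball (0 : ℝ) (ε m)
    · rw [Metric.mem_ball, dist_zero_right, Real.norm_eq_abs, abs_lt] at ht
      have h0 := H N v (ε m - t) a b 0 (by linarith) ha hb le_rfl
        (by linarith [hεδ m])
      have h1 := mul_nonneg ((φ m).nonneg_normed (μ := volume) t) h0
      refine h1.trans_eq ?_
      rw [Finset.mul_sum]
      refine Finset.sum_congr rfl fun i _ => ?_
      rw [Finset.mul_sum]
      refine Finset.sum_congr rfl fun j _ => ?_
      have hs : sq4 (ε m - t) a b 0 ((i : ℕ) + (j : ℕ)) =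
          a * (-1) ^ ((i : ℕ) + (j : ℕ)) + b * (1 / 2) ^ ((i : ℕ) + (j : ℕ)) + ε m - t := by
        simp only [sq4]; ring
      rw [← hs, hF1e]
      · ring
      · rw [hs, abs_le]
        have p1 : 0 ≤ b * (1 / 2 : ℝ) ^ ((i : ℕ) + (j : ℕ)) := by positivity
        have p2 : b * (1 / 2 : ℝ) ^ ((i : ℕ) + (j : ℕ)) ≤ b :=
          mul_le_of_le_one_right hb (pow_le_one₀ (by norm_num) (by norm_num))
        have := hεδ m
        rcases neg_one_pow_eq_or ℝ ((i : ℕ) + (j : ℕ)) with h | h <;> rw [h] <;>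
          constructor <;> linarith
    · have : (φ m).normed volume t = 0 := by
        have hsupp := (φ m).support_normed_eq (μ := volume)
        by_contra hne
        have : t ∈ Function.support ((φ m).normed volume) := hne
        rw [hsupp] at this
        exact ht this
      simp [this]
  have hser := fun m => smooth_series (f := f m) (R := r + δ)
    (fun t _ => (hfd m).contDiffAt) (hQ m) (by positivity)
  exact compact_series hr f (fun m k => iteratedDeriv k (f m) 0 / k.factorial)
    (fun m => (hser m).1) (fun m x hx => (hser m).2 x (by linarith)) hflim

lemma analytic_of_series {F : ℝ → ℝ} {r x : ℝ} (d : ℕ → ℝ)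
    (h : ∀ x, |x| < r → HasSum (fun k => d k * x ^ k) (F x)) (hx : |x| < r) : AnalyticAt ℝ F x := by
  obtain ⟨y, hxy, hyr⟩ := exists_between hx
  have hy0 : 0 < y := (abs_nonneg x).trans_lt hxy
  have hB : HasFPowerSeriesOnBall F (FormalMultilinearSeries.ofScalars ℝ d) 0 (ENNReal.ofReal y) := by
    refine ⟨?_, by simpa using hy0, ?_⟩
    · refine FormalMultilinearSeries.le_radius_of_tendsto _ (l := 0) ?_
      have hs := (h y (by rwa [abs_of_pos hy0])).summable.tendsto_atTop_zero.norm
      simp only [norm_zero] at hs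
      refine hs.congr fun k => ?_
      rw [FormalMultilinearSeries.ofScalars_norm, norm_mul, norm_pow, Real.norm_of_nonneg hy0.le,
        Real.coe_toNNReal _ hy0.le]
    · intro z hz
      rw [Metric.eball_ofReal, Metric.mem_ball, dist_zero_right, Real.norm_eq_abs] at hz
      have hh := h z (hz.trans hyr)
      simpa [FormalMultilinearSeries.ofScalars_apply_eq, zero_add, mul_comm] using hh
  refine hB.analyticAt_of_mem ?_
  rw [Metric.eball_ofReal, Metric.mem_ball, dist_zero_right, Real.norm_eq_abs]
  exact hxy

lemma two_three {ρ : ℝ} (hρ : 0 < ρ) {F : ℝ → ℝ} (H : Pres F ρ) :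
    AnalyticOnNhd ℝ F (Set.Ioo (-ρ) ρ) ∧
          (∀ k : ℕ, ∀ x ∈ Set.Ioo (0 : ℝ) ρ,
            0 ≤ iteratedDerivWithin k F (Set.Ioo 0 ρ) x) ∧
          (∃ L : ℝ, Tendsto F (nhdsWithin ρ (Set.Iio ρ)) (nhds L) ∧ L ≤ F ρ) ∧
          |F (-ρ)| ≤ F ρ := by
  have han : AnalyticOnNhd ℝ F (Set.Ioo (-ρ) ρ) := by
    intro x hx
    obtain ⟨r, hxr, hr⟩ := exists_between (abs_lt.2 hx)
    obtain ⟨d, hd⟩ := H.series ((abs_nonneg x).trans_lt hxr) hr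
    exact analytic_of_series d hd hxr
  refine ⟨han, ?_, ?_, ?_⟩
  · intro k x hx
    rw [iteratedDerivWithin_of_isOpen isOpen_Ioo hx]
    exact (abs_nonneg _).trans
      (loewner (fun t ht => (han t ht).contDiffAt) H.presQ hx.1.le hx.2 k)
  · have hmono : MonotoneOn F (Ioo 0 ρ) := fun a ha b hb hab => H.mono ha.1.le hab hb.2.le
    have hne : (Ioo 0 ρ).Nonempty := nonempty_Ioo.2 hρ
    have hub : ∀ y ∈ F '' Ioo 0 ρ, y ≤ F ρ := by
      rintro _ ⟨a, ha, rfl⟩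
      exact H.mono ha.1.le ha.2.le le_rfl
    refine ⟨sSup (F '' Ioo 0 ρ), ?_, csSup_le (hne.image F) hub⟩
    exact MonotoneOn.tendsto_nhdsWithin_Ioo_left hne hmono ⟨F ρ, hub⟩
  · have h1 := H 2 ![1, 1] 0 ρ 0 0 le_rfl hρ.le le_rfl le_rfl (by linarith)
    have h2 := H 2 ![1, -1] 0 ρ 0 0 le_rfl hρ.le le_rfl le_rfl (by linarith)
    simp [Fin.sum_univ_succ, sq4] at h1 h2
    rw [abs_le]; constructor <;> linarith

lemma psd_pow {n : ℕ} {A : Matrix (Fin n) (Fin n) ℝ} (hA : A.PosSemidef) (k : ℕ) :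
    (Matrix.of fun i j => A i j ^ k).PosSemidef := by
  induction k with
  | zero =>
    rw [psd_iff_quad]
    refine ⟨fun i j => by simp, fun v => ?_⟩
    have := quad_pow v 1
    simp only [one_pow, mul_one] at this
    simp only [Matrix.of_apply, pow_zero, mul_one]
    rw [this]
    positivity
  | succ k ih =>
    have := ih.hadamard hA
    have e : (Matrix.of fun i j => A i j ^ (k + 1)) =
        (Matrix.of fun i j => A i j ^ k).hadamard A := by
      ext i j; simp [Matrix.hadamard, pow_succ]
    rw [e]
    exact this

lemma quad_powk {n : ℕ} {A : Matrix (Fin n) (Fin n) ℝ} (hA : A.PosSemidef) (v : Fin n → ℝ)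
    (k : ℕ) : 0 ≤ ∑ i, ∑ j, v i * v j * A i j ^ k :=
  ((psd_iff_quad _).1 (psd_pow hA k)).2 v

lemma three_series {ρ : ℝ} (hρ : 0 < ρ) {F : ℝ → ℝ}
    (han : AnalyticOnNhd ℝ F (Set.Ioo (-ρ) ρ))
    (hab : ∀ k : ℕ, ∀ x ∈ Set.Ioo (0 : ℝ) ρ, 0 ≤ iteratedDerivWithin k F (Set.Ioo 0 ρ) x) :
    ∃ c : ℕ → ℝ, (∀ k, 0 ≤ c k) ∧ ∀ x, |x| < ρ → HasSum (fun k => c k * x ^ k) (F x) := by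
  have hf : ∀ t ∈ Ioo (-ρ) ρ, ContDiffAt ℝ ∞ F t := fun t ht => (han t ht).contDiffAt
  have h0 : (0 : ℝ) ∈ Ioo (-ρ) ρ := ⟨by linarith, hρ⟩
  have hpos1 : ∀ k : ℕ, ∀ x ∈ Ioo (0 : ℝ) ρ, 0 ≤ iteratedDeriv k F x := by
    intro k x hx
    have := hab k x hx
    rwa [iteratedDerivWithin_of_isOpen isOpen_Ioo hx] at this
  have hpos : ∀ k : ℕ, ∀ x ∈ Ico (0 : ℝ) ρ, 0 ≤ iteratedDeriv k F x := by
    intro k x hx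
    rcases hx.1.eq_or_lt with h | h
    · rw [← h]
      have hc : Tendsto (iteratedDeriv k F) (𝓝[>] 0) (𝓝 (iteratedDeriv k F 0)) :=
        (idiff hf k h0).continuousAt.tendsto.mono_left nhdsWithin_le_nhds
      refine ge_of_tendsto hc ?_
      filter_upwards [Ioo_mem_nhdsGT hρ] with y hy using hpos1 k y hy
    · exact hpos1 k x ⟨h, hx.2⟩
  set c : ℕ → ℝ := fun k => iteratedDeriv k F 0 / k.factorial with hc
  have hc0 : ∀ k, 0 ≤ c k := fun k => div_nonneg (hpos k 0 ⟨le_rfl, hρ⟩) (by positivity)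
  have hser : ∀ x, 0 ≤ x → x < ρ → HasSum (fun k => c k * x ^ k) (F x) := by
    intro x hx hxρ
    refine bern hf hpos (by rwa [abs_of_nonneg hx]) ?_
    intro n s hs
    rw [abs_of_nonneg hx, abs_of_nonneg]
    refine hpos n _ ⟨mul_nonneg hs.1 hx, ?_⟩
    nlinarith [hs.2, hs.1]
  set G : ℝ → ℝ := fun x => ∑' k, c k * x ^ k with hG
  have hGs : ∀ x, |x| < ρ → HasSum (fun k => c k * x ^ k) (G x) := by
    intro x hx
    refine Summable.hasSum ?_
    refine Summable.of_norm_bounded (hser |x| (abs_nonneg x) hx).summable fun k => ?_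
    rw [Real.norm_eq_abs, abs_mul, abs_pow, abs_of_nonneg (hc0 k)]
  have hGan : AnalyticOnNhd ℝ G (Ioo (-ρ) ρ) := fun x hx =>
    analytic_of_series c hGs (abs_lt.2 hx)
  have heq : EqOn F G (Ioo (-ρ) ρ) := by
    refine han.eqOn_of_preconnected_of_eventuallyEq hGan isPreconnected_Ioo
      (z₀ := ρ / 2) ⟨by linarith, by linarith⟩ ?_
    have : Ioo 0 ρ ∈ 𝓝 (ρ / 2) := Ioo_mem_nhds (by linarith) (by linarith)
    filter_upwards [this] with x hx
    exact (hser x hx.1.le hx.2).unique (hGs x (by rw [abs_of_pos hx.1]; exact hx.2))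
  refine ⟨c, hc0, fun x hx => ?_⟩
  rw [heq (abs_lt.1 hx)]
  exact hGs x hx

lemma quad_open {ρ : ℝ} {F : ℝ → ℝ} {c : ℕ → ℝ} (hc : ∀ k, 0 ≤ c k)
    (hs : ∀ x, |x| < ρ → HasSum (fun k => c k * x ^ k) (F x))
    {n : ℕ} {A : Matrix (Fin n) (Fin n) ℝ} (hA : A.PosSemidef) (hb : ∀ i j, |A i j| < ρ)
    (v : Fin n → ℝ) : 0 ≤ ∑ i, ∑ j, v i * v j * F (A i j) := by
  have h1 : HasSum (fun k => ∑ i, ∑ j, v i * v j * (c k * A i j ^ k))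
      (∑ i, ∑ j, v i * v j * F (A i j)) :=
    hasSum_sum fun i _ => hasSum_sum fun j _ => (hs _ (hb i j)).mul_left _
  refine h1.nonneg fun k => ?_
  have := mul_nonneg (hc k) (quad_powk hA v k)
  refine this.trans_eq ?_
  rw [Finset.mul_sum]
  refine Finset.sum_congr rfl fun i _ => ?_
  rw [Finset.mul_sum]
  refine Finset.sum_congr rfl fun j _ => ?_
  ring

lemma quad_no_neg {ρ : ℝ} (hρ : 0 < ρ) {F : ℝ → ℝ} {c : ℕ → ℝ} (hc : ∀ k, 0 ≤ c k)
    (hs : ∀ x, |x| < ρ → HasSum (fun k => c k * x ^ k) (F x))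
    (hcont : ∀ x ∈ Ioo (-ρ) ρ, ContinuousAt F x)
    {L : ℝ} (hL : Tendsto F (𝓝[<] ρ) (𝓝 L)) (hLF : L ≤ F ρ)
    {n : ℕ} {A : Matrix (Fin n) (Fin n) ℝ} (hA : A.PosSemidef) (hb : ∀ i j, A i j ∈ Ioc (-ρ) ρ)
    (v : Fin n → ℝ) : 0 ≤ ∑ i, ∑ j, v i * v j * F (A i j) := by
  have habs : ∀ i j, |A i j| ≤ ρ := fun i j => abs_le.2 ⟨(hb i j).1.le, (hb i j).2⟩
  -- the limit of the shrunken matrices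
  have h1 : 0 ≤ ∑ i, ∑ j, v i * v j * (if A i j = ρ then L else F (A i j)) := by
    have ht : Tendsto (fun t : ℝ => ∑ i, ∑ j, v i * v j * F (t * A i j)) (𝓝[<] 1)
        (𝓝 (∑ i, ∑ j, v i * v j * (if A i j = ρ then L else F (A i j)))) := by
      refine tendsto_finsetSum _ fun i _ => tendsto_finsetSum _ fun j _ =>
        Tendsto.const_mul _ ?_
      have hm : Tendsto (fun t : ℝ => t * A i j) (𝓝[<] 1) (𝓝 (A i j)) := by
        have : Tendsto (fun t : ℝ => t * A i j) (𝓝 1) (𝓝 (1 * A i j)) :=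
          Continuous.tendsto (by fun_prop) 1
        rw [one_mul] at this
        exact this.mono_left nhdsWithin_le_nhds
      split_ifs with h
      · refine hL.comp (tendsto_nhdsWithin_iff.2 ⟨by rw [h] at hm ⊢; exact hm, ?_⟩)
        filter_upwards [self_mem_nhdsWithin] with t ht
        rw [h]
        have ht1 : t < 1 := ht
        exact mul_lt_of_lt_one_left hρ ht1
      · exact (hcont _ ⟨(hb i j).1, lt_of_le_of_ne (hb i j).2 h⟩).tendsto.comp hm
    refine ge_of_tendsto ht ?_
    filter_upwards [Ioo_mem_nhdsLT (zero_lt_one (α := ℝ))] with t ht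
    have hA' : (t • A).PosSemidef := hA.smul ht.1.le
    refine quad_open hc hs hA' (fun i j => ?_) v
    rw [Matrix.smul_apply, smul_eq_mul, abs_mul, abs_of_pos ht.1]
    calc t * |A i j| ≤ t * ρ := mul_le_mul_of_nonneg_left (habs i j) ht.1.le
      _ < ρ := mul_lt_of_lt_one_left hρ ht.2
  have h2 : 0 ≤ ∑ i, ∑ j, v i * v j * (if A i j = ρ then (1 : ℝ) else 0) := by
    have ht : Tendsto (fun k : ℕ => ∑ i, ∑ j, v i * v j * (ρ⁻¹ • A) i j ^ k) atTop
        (𝓝 (∑ i, ∑ j, v i * v j * (if A i j = ρ then (1 : ℝ) else 0))) := by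
      refine tendsto_finsetSum _ fun i _ => tendsto_finsetSum _ fun j _ =>
        Tendsto.const_mul _ ?_
      rw [Matrix.smul_apply, smul_eq_mul]
      split_ifs with h
      · rw [h, inv_mul_cancel₀ hρ.ne']
        exact tendsto_const_nhds.congr fun k => (one_pow k).symm
      · refine tendsto_pow_atTop_nhds_zero_of_abs_lt_one ?_
        rw [abs_mul, abs_of_pos (inv_pos.2 hρ), inv_mul_lt_one₀ hρ, abs_lt]
        exact ⟨(hb i j).1, lt_of_le_of_ne (hb i j).2 h⟩
    exact ge_of_tendsto' ht fun k => quad_powk (hA.smul (inv_pos.2 hρ).le) v k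
  have h3 := add_nonneg h1 (mul_nonneg (sub_nonneg.2 hLF) h2)
  refine h3.trans_eq ?_
  rw [Finset.mul_sum, ← Finset.sum_add_distrib]
  refine Finset.sum_congr rfl fun i _ => ?_
  rw [Finset.mul_sum, ← Finset.sum_add_distrib]
  refine Finset.sum_congr rfl fun j _ => ?_
  split_ifs with h
  · rw [h]; ring
  · ring

lemma hankel_seq {n : ℕ} {A : Matrix (Fin n) (Fin n) ℝ} (hH : IsHankelMat A) :
    ∃ s : ℕ → ℝ, ∀ i j : Fin n, A i j = s ((i : ℕ) + (j : ℕ)) := by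
  classical
  refine ⟨fun r => if h : ∃ p : Fin n × Fin n, (p.1 : ℕ) + (p.2 : ℕ) = r then
    A h.choose.1 h.choose.2 else 0, fun i j => ?_⟩
  have h : ∃ p : Fin n × Fin n, (p.1 : ℕ) + (p.2 : ℕ) = (i : ℕ) + (j : ℕ) := ⟨(i, j), rfl⟩
  beta_reduce
  rw [dif_pos h]
  exact hH _ _ _ _ h.choose_spec.symm

lemma hankel_step {n : ℕ} {A : Matrix (Fin n) (Fin n) ℝ} {ρ : ℝ} (hA : A.PosSemidef)
    (hb : ∀ i j, A i j ∈ Icc (-ρ) ρ) (p q : Fin n) (h : A p q = -ρ) :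
    A p p = ρ ∧ A q q = ρ ∧ ∀ k, A k p = - A k q := by
  have hsym := ((psd_iff_quad A).1 hA).1
  have e : star (Pi.single p 1 + Pi.single q 1 : Fin n → ℝ) ⬝ᵥ
      A.mulVec (Pi.single p 1 + Pi.single q 1) = A p p + A q q + 2 * A p q := by
    simp [Matrix.mulVec_add, add_dotProduct]
    rw [hsym q p]; ring
  have h0 := hA.dotProduct_mulVec_nonneg (Pi.single p 1 + Pi.single q 1)
  rw [e, h] at h0
  have hp := (hb p p).2
  have hq := (hb q q).2
  have hp' : A p p = ρ := by linarith
  have hq' : A q q = ρ := by linarith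
  refine ⟨hp', hq', fun k => ?_⟩
  have hz := (hA.dotProduct_mulVec_zero_iff _).1 (e.trans (by rw [hp', hq', h]; ring))
  have := congrFun hz k
  simp [Matrix.mulVec_add] at this
  linarith

lemma hankel_neg {n : ℕ} {A : Matrix (Fin n) (Fin n) ℝ} {ρ : ℝ} (hρ : 0 < ρ)
    (hH : IsHankelMat A) (hA : A.PosSemidef)
    (hb : ∀ i j, A i j ∈ Icc (-ρ) ρ) (p q : Fin n) (h : A p q = -ρ) :
    ∀ i j : Fin n, A i j = ρ * (-1) ^ ((i : ℕ) + (j : ℕ)) := by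
  obtain ⟨s, hs⟩ := hankel_seq hH
  have hstep : ∀ m, m + 1 < n → s (2 * m + 1) = -ρ →
      s (2 * m) = ρ ∧ s (2 * m + 2) = ρ ∧ ∀ k < n, s (k + m) = - s (k + (m + 1)) := by
    intro m hm hsm
    have := hankel_step hA hb ⟨m, by omega⟩ ⟨m + 1, hm⟩
      (by rw [hs, ← hsm]; congr 1; simp only; omega)
    simp only [hs] at this
    refine ⟨?_, ?_, fun k hk => this.2.2 ⟨k, hk⟩⟩
    · rw [← this.1]; congr 1; omega
    · rw [← this.2.1]; congr 1; omega
  have hup : ∀ m, m + 2 < n → s (2 * m + 1) = -ρ → s (2 * (m + 1) + 1) = -ρ := by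
    intro m hm h1
    obtain ⟨a, b, c⟩ := hstep m (by omega) h1
    have := c (m + 2) hm
    rw [show m + 2 + m = 2 * m + 2 by omega, b,
      show m + 2 + (m + 1) = 2 * (m + 1) + 1 by omega] at this
    linarith
  have hdown : ∀ m, m + 2 < n → s (2 * (m + 1) + 1) = -ρ → s (2 * m + 1) = -ρ := by
    intro m hm h1
    obtain ⟨a, b, c⟩ := hstep (m + 1) (by omega) h1
    have := c m (by omega)
    rw [show m + (m + 1) = 2 * m + 1 by omega,
      show m + (m + 1 + 1) = 2 * (m + 1) by omega, a] at this
    exact this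
  have hiff : ∀ m, m + 1 < n → (s (2 * m + 1) = -ρ ↔ s (2 * 0 + 1) = -ρ) := by
    intro m
    induction m with
    | zero => intro _; rfl
    | succ m ih =>
      intro hm
      rw [← ih (by omega)]
      exact ⟨hdown m hm, hup m hm⟩
  have hpq := hs p q
  rw [h] at hpq
  have hpl := p.2
  have hql := q.2
  have hbase : s (2 * 0 + 1) = -ρ ∧ 1 < n := by
    rcases Nat.even_or_odd' ((p : ℕ) + (q : ℕ)) with ⟨m, hm | hm⟩
    · exfalso
      have hmn : m < n := by omega
      have h1 : 0 ≤ A ⟨m, hmn⟩ ⟨m, hmn⟩ := hA.diag_nonneg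
      rw [hs] at h1
      rw [hm, two_mul] at hpq
      simp only at h1
      linarith
    · have hmn : m + 1 < n := by omega
      refine ⟨(hiff m hmn).1 ?_, by omega⟩
      rw [← hm, ← hpq]
  intro i j
  have hil := i.2
  have hjl := j.2
  rw [hs]
  rcases Nat.even_or_odd' ((i : ℕ) + (j : ℕ)) with ⟨m, hm | hm⟩
  · rw [hm, (even_two_mul m).neg_one_pow, mul_one]
    by_cases hmn : m + 1 < n
    · exact (hstep m hmn ((hiff m hmn).2 hbase.1)).1
    · obtain ⟨l, rfl⟩ : ∃ l, m = l + 1 := ⟨m - 1, by omega⟩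
      have hl : l + 1 < n := by omega
      exact (hstep l hl ((hiff l hl).2 hbase.1)).2.1
  · rw [hm, (odd_two_mul_add_one m).neg_one_pow]
    have hmn : m + 1 < n := by omega
    rw [(hiff m hmn).2 hbase.1]; ring

lemma three_one {ρ : ℝ} (hρ : 0 < ρ) {F : ℝ → ℝ}
    (H : AnalyticOnNhd ℝ F (Set.Ioo (-ρ) ρ) ∧
          (∀ k : ℕ, ∀ x ∈ Set.Ioo (0 : ℝ) ρ,
            0 ≤ iteratedDerivWithin k F (Set.Ioo 0 ρ) x) ∧
          (∃ L : ℝ, Tendsto F (nhdsWithin ρ (Set.Iio ρ)) (nhds L) ∧ L ≤ F ρ) ∧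
          |F (-ρ)| ≤ F ρ) (n : ℕ) (A : Matrix (Fin n) (Fin n) ℝ) (hH : IsHankelMat A)
    (hb : ∀ i j, A i j ∈ Set.Icc (-ρ) ρ) (hA : A.PosSemidef) : (A.map F).PosSemidef := by
  obtain ⟨han, hab, ⟨L, hL, hLF⟩, hF⟩ := H
  obtain ⟨c, hc, hs⟩ := three_series hρ han hab
  rw [psd_iff_quad]
  refine ⟨fun i j => ?_, fun v => ?_⟩
  · rw [Matrix.map_apply, Matrix.map_apply, ((psd_iff_quad A).1 hA).1]
  · simp only [Matrix.map_apply]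
    by_cases hneg : ∃ p q, A p q = -ρ
    · obtain ⟨p, q, hpq⟩ := hneg
      have hall := hankel_neg hρ hH hA hb p q hpq
      have := quad_sign v F ρ 1
      simp only [one_pow, mul_one] at this
      simp only [hall]
      rw [this]
      rw [abs_le] at hF
      have h1 : 0 ≤ F ρ + F (-ρ) := by linarith
      have h2 : 0 ≤ F ρ - F (-ρ) := by linarith
      positivity
    · push Not at hneg
      exact quad_no_neg hρ hc hs (fun x hx => (han x hx).continuousAt) hL hLF hA
        (fun i j => ⟨lt_of_le_of_ne (hb i j).1 (hneg i j).symm, (hb i j).2⟩) v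

/-- Entrywise positivity preservers of positive semidefinite Hankel matrices with
entries in `[-ρ, ρ]`. -/
theorem preserver_closed_symm_hankel_TFAE (ρ : ℝ) (hρ : 0 < ρ) (F : ℝ → ℝ) :
    List.TFAE
      [∀ (n : ℕ) (A : Matrix (Fin n) (Fin n) ℝ), IsHankelMat A →
          (∀ i j, A i j ∈ Set.Icc (-ρ) ρ) → A.PosSemidef → (A.map F).PosSemidef,
        ∀ (n : ℕ) (A : Matrix (Fin n) (Fin n) ℝ),
          (∃ μ : Measure ℝ, IsAdmissible μ ∧
            ∀ i j : Fin n, A i j = moment μ ((i : ℕ) + (j : ℕ))) →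
          (∀ i j, A i j ∈ Set.Icc (-ρ) ρ) → A.PosSemidef → (A.map F).PosSemidef,
        AnalyticOnNhd ℝ F (Set.Ioo (-ρ) ρ) ∧
          (∀ k : ℕ, ∀ x ∈ Set.Ioo (0 : ℝ) ρ,
            0 ≤ iteratedDerivWithin k F (Set.Ioo 0 ρ) x) ∧
          (∃ L : ℝ, Tendsto F (nhdsWithin ρ (Set.Iio ρ)) (nhds L) ∧ L ≤ F ρ) ∧
          |F (-ρ)| ≤ F ρ] := by
  tfae_have 1 → 2 := by
    rintro h n A ⟨μ, _, hμ⟩ hb hA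
    refine h n A (fun i j k l e => ?_) hb hA
    rw [hμ, hμ, e]
  tfae_have 2 → 3 := fun H =>
    two_three hρ (fun N v g a b k hg ha hb hk hs => core2 H v hg ha hb hk hs)
  tfae_have 3 → 1 := fun H => three_one hρ H
  tfae_finish
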